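/- Let 𝒪 be a commutative local ring with maximal ideal 𝔪 and residue field k = 𝒪/𝔪, and let n ≥ 1 and m ≥ 1 be integers. Let v₁,…,v_m ∈ 𝒪^{n+1} be vectors, each having at least one coordinate that is a unit of 𝒪, such that for all i ≠ j the reductions v̄_i, v̄_j ∈ k^{n+1} are linearly independent over k. Then there exists an integer d₀ such that for every d ≥ d₀ the following holds: for every homogeneous polynomial G ∈ k[X₀,…,X_n] of degree d with G(v̄_i) = 0 for all i = 1,…,m, there exists a homogeneous polynomial F ∈ 𝒪[X₀,…,X_n] of degree d whose coefficientwise reduction modulo 𝔪 equals G and which satisfies F(v_i) = 0 for all i = 1,…,m. -/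

import Mathlib

/-!
The points impose independent conditions in every degree `d ≥ m`, already over the local
ring. For `i ≠ j` some `2 × 2` minor of `(v i, v j)` is a unit, because the reductions are
independent; hence there is a linear form vanishing at `v j` and taking a unit value at `v i`
(`exists_separating_form`). Multiplying such forms over all `j ≠ i`, and padding with a power of
a coordinate that is a unit at `v i`, gives forms `E i` of degree `d` with `E i (v j) = δ i j`
(`exists_dual_form`). If `F₀` is any homogeneous lift of `G`, the values `F₀ (v i)` lie in the
maximal ideal, so `F₀ - ∑ i, F₀ (v i) • E i` still reduces to `G` and vanishes at every `v i`.
-/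

open MvPolynomial in
/-- With `v a` a unit, the form is `v a * X b - v b * X a`; its value at `u` is a `2 × 2` minor,
and these minors cannot all reduce to zero. -/
lemma exists_separating_form {O : Type*} [CommRing O] [IsLocalRing O] {σ : Type*}
    (u v : σ → O) (hv : ∃ a, IsUnit (v a))
    (h : LinearIndependent (IsLocalRing.ResidueField O)
        ![(fun l => IsLocalRing.residue O (u l)), (fun l => IsLocalRing.residue O (v l))]) :
    ∃ L : MvPolynomial σ O, L.IsHomogeneous 1 ∧ eval v L = 0 ∧ IsUnit (eval u L) := by
  obtain ⟨a, ha⟩ := hv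
  have key : ∃ b, IsUnit (v a * u b - v b * u a) := by
    by_contra! hb
    rw [LinearIndependent.pair_iff] at h
    have h0 := (h (IsLocalRing.residue O (v a)) (-IsLocalRing.residue O (u a)) (by
      funext b
      have hz : IsLocalRing.residue O (v a * u b - v b * u a) = 0 :=
        (IsLocalRing.residue_eq_zero_iff _).2 ((IsLocalRing.mem_maximalIdeal _).2 (hb b))
      simp only [map_sub, map_mul] at hz
      simp only [Pi.add_apply, Pi.smul_apply, smul_eq_mul, Pi.zero_apply]
      linear_combination hz)).1
    exact (IsLocalRing.residue_ne_zero_iff_isUnit _).2 ha h0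
  obtain ⟨b, hb⟩ := key
  refine ⟨C (v a) * X b - C (v b) * X a, ?_, ?_, ?_⟩
  · exact ((isHomogeneous_X O b).C_mul _).sub ((isHomogeneous_X O a).C_mul _)
  · simp [mul_comm]
  · simpa using hb

open MvPolynomial in
lemma exists_dual_form {O : Type*} [CommRing O] [IsLocalRing O] {σ : Type*} {m : ℕ}
    (v : Fin m → σ → O) (hunimod : ∀ i, ∃ j, IsUnit (v i j))
    (hindep : ∀ i j : Fin m, i ≠ j →
      LinearIndependent (IsLocalRing.ResidueField O)
        ![(fun l => IsLocalRing.residue O (v i l)), (fun l => IsLocalRing.residue O (v j l))])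
    (d : ℕ) (hd : m ≤ d) (i : Fin m) :
    ∃ E : MvPolynomial σ O, E.IsHomogeneous d ∧ ∀ j, eval (v j) E = if i = j then 1 else 0 := by
  have hL : ∀ j, ∃ L : MvPolynomial σ O, i ≠ j →
      L.IsHomogeneous 1 ∧ eval (v j) L = 0 ∧ IsUnit (eval (v i) L) := by
    intro j
    by_cases hij : i = j
    · exact ⟨0, fun h => absurd hij h⟩
    · obtain ⟨L, hL⟩ := exists_separating_form (v i) (v j) (hunimod j) (hindep i j hij)
      exact ⟨L, fun _ => hL⟩
  choose L hL using hL
  obtain ⟨a, ha⟩ := hunimod i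
  set s := Finset.univ.erase i with hs
  have hne : ∀ j ∈ s, i ≠ j := fun j hj => (Finset.ne_of_mem_erase hj).symm
  have hcard : s.card ≤ d := (Finset.card_le_univ s).trans (by simpa using hd)
  have hprod : (∏ j ∈ s, L j).IsHomogeneous s.card := by
    simpa using IsHomogeneous.prod s L (fun _ => 1) fun j hj => (hL j (hne j hj)).1
  set P : MvPolynomial σ O := (∏ j ∈ s, L j) * X a ^ (d - s.card) with hP
  have hPd : P.IsHomogeneous d := by
    simpa [Nat.add_sub_cancel' hcard] using hprod.mul (isHomogeneous_X_pow a (d - s.card))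
  have hunit : IsUnit (eval (v i) P) := by
    simp only [hP, map_mul, map_pow, eval_X, map_prod]
    refine IsUnit.mul ?_ (ha.pow _)
    rw [IsUnit.prod_iff]
    exact fun j hj => (hL j (hne j hj)).2.2
  obtain ⟨c, hc⟩ := hunit.exists_left_inv
  refine ⟨C c * P, hPd.C_mul c, fun j => ?_⟩
  by_cases hij : i = j
  · subst hij
    simpa using hc
  · have hj : j ∈ s := by simp [hs, Ne.symm hij]
    have h0 : eval (v j) (∏ j ∈ s, L j) = 0 := by
      rw [map_prod]
      exact Finset.prod_eq_zero hj (hL j hij).2.1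
    simp [hP, h0, hij]

open MvPolynomial in
lemma exists_homogeneous_lift {R S σ : Type*} [CommRing R] [CommRing S] (f : R →+* S)
    (hf : Function.Surjective f) {d : ℕ} (G : MvPolynomial σ S) (hG : G.IsHomogeneous d) :
    ∃ F : MvPolynomial σ R, F.IsHomogeneous d ∧ map f F = G := by
  refine ⟨∑ x ∈ G.support, monomial x (Function.surjInv hf (G.coeff x)), ?_, ?_⟩
  · refine IsHomogeneous.sum _ _ _ fun x hx => isHomogeneous_monomial _ ?_
    rw [Finsupp.degree_eq_weight_one]
    exact hG (mem_support_iff.1 hx)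
  · simp only [map_sum, map_monomial, Function.surjInv_eq hf]
    exact G.support_sum_monomial_coeff

theorem lift_hypersurface_through_points
    (O : Type*) [CommRing O] [IsLocalRing O]
    (n m : ℕ) (hn : 1 ≤ n) (hm : 1 ≤ m)
    (v : Fin m → (Fin (n + 1) → O))
    (hunimod : ∀ i, ∃ j, IsUnit (v i j))
    (hindep : ∀ i j : Fin m, i ≠ j →
      LinearIndependent (IsLocalRing.ResidueField O)
        ![(fun l => IsLocalRing.residue O (v i l)),
          (fun l => IsLocalRing.residue O (v j l))]) :
    ∃ d₀ : ℕ, ∀ d : ℕ, d₀ ≤ d →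
      ∀ G : MvPolynomial (Fin (n + 1)) (IsLocalRing.ResidueField O),
        G.IsHomogeneous d →
        (∀ i, MvPolynomial.eval (fun l => IsLocalRing.residue O (v i l)) G = 0) →
        ∃ F : MvPolynomial (Fin (n + 1)) O,
          F.IsHomogeneous d ∧
          MvPolynomial.map (IsLocalRing.residue O) F = G ∧
          ∀ i, MvPolynomial.eval (v i) F = 0 := by
  refine ⟨m, fun d hd G hG hG0 => ?_⟩
  choose E hE hEv using exists_dual_form v hunimod hindep d hd
  obtain ⟨F₀, hF₀, hmap⟩ := exists_homogeneous_lift _ IsLocalRing.residue_surjective G hG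
  have hres : ∀ i, IsLocalRing.residue O (MvPolynomial.eval (v i) F₀) = 0 := by
    intro i
    rw [← hG0 i, ← hmap, MvPolynomial.eval_map, MvPolynomial.eval, MvPolynomial.coe_eval₂Hom,
      MvPolynomial.hom_eval₂]
    rfl
  refine ⟨F₀ - ∑ i, MvPolynomial.C (MvPolynomial.eval (v i) F₀) * E i, ?_, ?_, fun j => ?_⟩
  · exact hF₀.sub (MvPolynomial.IsHomogeneous.sum _ _ _ fun i _ => (hE i).C_mul _)
  · simp [hmap, hres]
  · simp [hEv]
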